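/- Define on $B_{\ge0}$ the $0$-operators $\tilde e_0,\tilde f_0$ via the six cases $(E_i),(F_i)$ determined by $z_1=\bar x_1-x_1$, $z_2=\bar x_2-\bar x_3$, $z_3=x_3-x_2$, $z_4=(\bar x_3-x_3)/2$. Then for all $b,b'\in B_{\ge0}$: $b'=\tilde f_0 b$ if and only if $b=\tilde e_0 b'$. -/

import Mathlib

/-!
The condition `(Fᵢ)` says that `i` is the first index at which the tuple `A` is maximal, and `(Eᵢ)`
that it is the last one, so exactly one of the six cases applies to each element. In case `i` the
operator `f̃₀` translates by a fixed vector, which lowers by exactly `1` each of the linear forms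
in `z₁, …, z₄` whose signs make up both `(Fᵢ)` and `(Eᵢ)`. As these forms are integral, `(Fᵢ)` for
`b` is the same as `(Eᵢ)` for the translate of `b`.
-/

/-- An element `(x₁,x₂,x₃,x̄₃,x̄₂,x̄₁)` (fields `x1 x2 x3 y3 y2 y1`). -/
structure C6 where
  x1 : ℤ
  x2 : ℤ
  x3 : ℤ
  y3 : ℤ
  y2 : ℤ
  y1 : ℤ
deriving DecidableEq

attribute [local instance] Classical.propDecidable

noncomputable section

/-- Membership in `B_{≥0}`: all coordinates nonnegative and `x₃ ≡ x̄₃ (mod 2)`. -/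
def memB (b : C6) : Prop :=
  0 ≤ b.x1 ∧ 0 ≤ b.x2 ∧ 0 ≤ b.x3 ∧ 0 ≤ b.y3 ∧ 0 ≤ b.y2 ∧ 0 ≤ b.y1 ∧
    b.x3 % 2 = b.y3 % 2

/-- Return `some b` if all coordinates are nonnegative, else `none` (i.e. `0`). -/
def chk (b : C6) : Option C6 :=
  if 0 ≤ b.x1 ∧ 0 ≤ b.x2 ∧ 0 ≤ b.x3 ∧ 0 ≤ b.y3 ∧ 0 ≤ b.y2 ∧ 0 ≤ b.y1 then some b
  else none

def zz1 (b : C6) : ℤ := b.y1 - b.x1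
def zz2 (b : C6) : ℤ := b.y2 - b.y3
def zz3 (b : C6) : ℤ := b.x3 - b.x2
def zz4 (b : C6) : ℤ := (b.y3 - b.x3) / 2

def F1c (b : C6) : Prop :=
  zz1 b + zz2 b + zz3 b + 3 * zz4 b ≤ 0 ∧ zz1 b + zz2 b + 3 * zz4 b ≤ 0 ∧
    zz1 b + zz2 b ≤ 0 ∧ zz1 b ≤ 0
def F2c (b : C6) : Prop :=
  zz1 b + zz2 b + zz3 b + 3 * zz4 b ≤ 0 ∧ zz2 b + 3 * zz4 b ≤ 0 ∧
    zz2 b ≤ 0 ∧ 0 < zz1 b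
def F3c (b : C6) : Prop :=
  zz1 b + zz3 b + 3 * zz4 b ≤ 0 ∧ zz3 b + 3 * zz4 b ≤ 0 ∧ zz4 b ≤ 0 ∧
    0 < zz2 b ∧ 0 < zz1 b + zz2 b
def F4c (b : C6) : Prop :=
  0 < zz1 b + zz2 b + 3 * zz4 b ∧ 0 < zz2 b + 3 * zz4 b ∧ 0 < zz4 b ∧
    zz3 b ≤ 0 ∧ zz1 b + zz3 b ≤ 0
def F5c (b : C6) : Prop :=
  0 < zz1 b + zz2 b + zz3 b + 3 * zz4 b ∧ 0 < zz3 b + 3 * zz4 b ∧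
    0 < zz3 b ∧ zz1 b ≤ 0
def F6c (b : C6) : Prop :=
  0 < zz1 b + zz2 b + zz3 b + 3 * zz4 b ∧ 0 < zz1 b + zz3 b + 3 * zz4 b ∧
    0 < zz1 b + zz3 b ∧ 0 < zz1 b

def E1c (b : C6) : Prop :=
  zz1 b + zz2 b + zz3 b + 3 * zz4 b < 0 ∧ zz1 b + zz2 b + 3 * zz4 b < 0 ∧
    zz1 b + zz2 b < 0 ∧ zz1 b < 0
def E2c (b : C6) : Prop :=
  zz1 b + zz2 b + zz3 b + 3 * zz4 b < 0 ∧ zz2 b + 3 * zz4 b < 0 ∧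
    zz2 b < 0 ∧ 0 ≤ zz1 b
def E3c (b : C6) : Prop :=
  zz1 b + zz3 b + 3 * zz4 b < 0 ∧ zz3 b + 3 * zz4 b < 0 ∧ zz4 b < 0 ∧
    0 ≤ zz2 b ∧ 0 ≤ zz1 b + zz2 b
def E4c (b : C6) : Prop :=
  0 ≤ zz1 b + zz2 b + 3 * zz4 b ∧ 0 ≤ zz2 b + 3 * zz4 b ∧ 0 ≤ zz4 b ∧
    zz3 b < 0 ∧ zz1 b + zz3 b < 0
def E5c (b : C6) : Prop :=
  0 ≤ zz1 b + zz2 b + zz3 b + 3 * zz4 b ∧ 0 ≤ zz3 b + 3 * zz4 b ∧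
    0 ≤ zz3 b ∧ zz1 b < 0
def E6c (b : C6) : Prop :=
  0 ≤ zz1 b + zz2 b + zz3 b + 3 * zz4 b ∧ 0 ≤ zz1 b + zz3 b + 3 * zz4 b ∧
    0 ≤ zz1 b + zz3 b ∧ 0 ≤ zz1 b

/-- The operator `f̃₀` on `B_{≥0}`, given by the six cases `(F₁)–(F₆)`. -/
def f0op (b : C6) : Option C6 :=
  if F1c b then chk ⟨b.x1 + 1, b.x2, b.x3, b.y3, b.y2, b.y1⟩
  else if F2c b then chk ⟨b.x1, b.x2, b.x3 + 1, b.y3 + 1, b.y2, b.y1 - 1⟩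
  else if F3c b then chk ⟨b.x1, b.x2, b.x3 + 2, b.y3, b.y2 - 1, b.y1⟩
  else if F4c b then chk ⟨b.x1, b.x2 + 1, b.x3, b.y3 - 2, b.y2, b.y1⟩
  else if F5c b then chk ⟨b.x1 + 1, b.x2, b.x3 - 1, b.y3 - 1, b.y2, b.y1⟩
  else if F6c b then chk ⟨b.x1, b.x2, b.x3, b.y3, b.y2, b.y1 - 1⟩
  else none

/-- The operator `ẽ₀` on `B_{≥0}`, given by the six cases `(E₁)–(E₆)`. -/
def e0op (b : C6) : Option C6 :=
  if E1c b then chk ⟨b.x1 - 1, b.x2, b.x3, b.y3, b.y2, b.y1⟩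
  else if E2c b then chk ⟨b.x1, b.x2, b.x3 - 1, b.y3 - 1, b.y2, b.y1 + 1⟩
  else if E3c b then chk ⟨b.x1, b.x2, b.x3 - 2, b.y3, b.y2 + 1, b.y1⟩
  else if E4c b then chk ⟨b.x1, b.x2 - 1, b.x3, b.y3 + 2, b.y2, b.y1⟩
  else if E5c b then chk ⟨b.x1 - 1, b.x2, b.x3 + 1, b.y3 + 1, b.y2, b.y1⟩
  else if E6c b then chk ⟨b.x1, b.x2, b.x3, b.y3, b.y2, b.y1 + 1⟩
  else none

/-- `s(b) = x₁+x₂+(x₃+x̄₃)/2+x̄₂+x̄₁`. -/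
def sB (b : C6) : ℤ := b.x1 + b.x2 + (b.x3 + b.y3) / 2 + b.y2 + b.y1

/-- `max A` for `A = (0, z₁, z₁+z₂, z₁+z₂+3z₄, z₁+z₂+z₃+3z₄, 2z₁+z₂+z₃+3z₄)`. -/
def maxA (b : C6) : ℤ :=
  max 0 (max (zz1 b) (max (zz1 b + zz2 b) (max (zz1 b + zz2 b + 3 * zz4 b)
    (max (zz1 b + zz2 b + zz3 b + 3 * zz4 b)
      (2 * zz1 b + zz2 b + zz3 b + 3 * zz4 b)))))

def phi0 (l : ℤ) (b : C6) : ℤ := l - sB b + maxA b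

def eps0 (l : ℤ) (b : C6) : ℤ :=
  l - sB b + maxA b - (2 * zz1 b + zz2 b + zz3 b + 3 * zz4 b)

section Maximizers

variable {ι α : Type*}

/-- `i` is the first index at which `f` is maximal. -/
def IsFirstMax [Preorder ι] [Preorder α] (f : ι → α) (i : ι) : Prop :=
  (∀ j < i, f j < f i) ∧ ∀ j > i, f j ≤ f i

/-- `i` is the last index at which `f` is maximal. -/
def IsLastMax [Preorder ι] [Preorder α] (f : ι → α) (i : ι) : Prop :=
  (∀ j < i, f j ≤ f i) ∧ ∀ j > i, f j < f i

theorem isFirstMax_comp_ofDual [Preorder ι] [Preorder α] {f : ι → α} {i : ι} :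
    IsFirstMax (f ∘ OrderDual.ofDual) (OrderDual.toDual i) ↔ IsLastMax f i :=
  and_comm

theorem IsFirstMax.eq [LinearOrder ι] [Preorder α] {f : ι → α} {i j : ι}
    (hi : IsFirstMax f i) (hj : IsFirstMax f j) : i = j := by
  rcases lt_trichotomy i j with hij | hij | hij
  · exact absurd (hj.1 i hij) (hi.2 j hij).not_gt
  · exact hij
  · exact absurd (hi.1 j hij) (hj.2 i hij).not_gt

theorem exists_isFirstMax [Finite ι] [Nonempty ι] [LinearOrder ι] [LinearOrder α] (f : ι → α) :
    ∃ i, IsFirstMax f i := by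
  obtain ⟨i, hi⟩ := Finite.exists_max fun i ↦ toLex (f i, OrderDual.toDual i)
  have hle (j : ι) : f j < f i ∨ f j = f i ∧ i ≤ j := Prod.Lex.toLex_le_toLex.1 (hi j)
  refine ⟨i, fun j hj ↦ ?_, fun j _ ↦ ?_⟩
  · exact (hle j).resolve_right fun h ↦ h.2.not_gt hj
  · exact (hle j).elim le_of_lt fun h ↦ h.1.le

theorem existsUnique_isFirstMax [Finite ι] [Nonempty ι] [LinearOrder ι] [LinearOrder α]
    (f : ι → α) : ∃! i, IsFirstMax f i :=
  existsUnique_of_exists_of_unique (exists_isFirstMax f) fun _ _ ↦ IsFirstMax.eq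

theorem existsUnique_isLastMax [Finite ι] [Nonempty ι] [LinearOrder ι] [LinearOrder α]
    (f : ι → α) : ∃! i, IsLastMax f i := by
  simp only [← isFirstMax_comp_ofDual]
  exact OrderDual.toDual.existsUnique_congr_left.2
    (existsUnique_isFirstMax (f ∘ OrderDual.ofDual))

end Maximizers

namespace C6

/-- All coordinates are nonnegative, that is, `chk` leaves the element unchanged. -/
def Nonneg (b : C6) : Prop :=
  0 ≤ b.x1 ∧ 0 ≤ b.x2 ∧ 0 ≤ b.x3 ∧ 0 ≤ b.y3 ∧ 0 ≤ b.y2 ∧ 0 ≤ b.y1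

/-- The translation `b ↦ b + v` of `ℤ⁶`; each case of `f̃₀` acts by one, and `ẽ₀` by its inverse. -/
@[simps]
def translate (v : C6) : Equiv.Perm C6 where
  toFun b := ⟨b.x1 + v.x1, b.x2 + v.x2, b.x3 + v.x3, b.y3 + v.y3, b.y2 + v.y2, b.y1 + v.y1⟩
  invFun b := ⟨b.x1 - v.x1, b.x2 - v.x2, b.x3 - v.x3, b.y3 - v.y3, b.y2 - v.y2, b.y1 - v.y1⟩
  left_inv b := by simp
  right_inv b := by simp

end C6

theorem memB.nonneg {b : C6} (hb : memB b) : b.Nonneg := by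
  obtain ⟨h1, h2, h3, h4, h5, h6, -⟩ := hb
  exact ⟨h1, h2, h3, h4, h5, h6⟩

theorem chk_eq_some_iff {c d : C6} (hd : d.Nonneg) : chk c = some d ↔ c = d := by
  constructor
  · intro h
    exact Option.some.inj (Option.ite_none_right_eq_some.1 h).2
  · rintro rfl
    exact if_pos hd

theorem zz1_translate (v b : C6) : zz1 (v.translate b) = zz1 b + zz1 v := by
  simp only [zz1, C6.translate_apply_x1, C6.translate_apply_y1, add_sub_add_comm]

theorem zz2_translate (v b : C6) : zz2 (v.translate b) = zz2 b + zz2 v := by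
  simp only [zz2, C6.translate_apply_y2, C6.translate_apply_y3, add_sub_add_comm]

theorem zz3_translate (v b : C6) : zz3 (v.translate b) = zz3 b + zz3 v := by
  simp only [zz3, C6.translate_apply_x2, C6.translate_apply_x3, add_sub_add_comm]

theorem zz4_translate {v : C6} (hv : 2 ∣ v.y3 - v.x3) (b : C6) :
    zz4 (v.translate b) = zz4 b + zz4 v := by
  simp only [zz4, C6.translate_apply_x3, C6.translate_apply_y3, add_sub_add_comm,
    Int.add_ediv_of_dvd_right hv]

/-- The tuple `A`, indexed from `0`: the entry `Aᵢ` is `tupleA b (i - 1)`. -/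
def tupleA (b : C6) : Fin 6 → ℤ :=
  ![0, zz1 b, zz1 b + zz2 b, zz1 b + zz2 b + 3 * zz4 b, zz1 b + zz2 b + zz3 b + 3 * zz4 b,
    2 * zz1 b + zz2 b + zz3 b + 3 * zz4 b]

/-- The conditions `(F₁)–(F₆)` as a family, indexed from `0`. -/
def CondF : Fin 6 → C6 → Prop :=
  ![F1c, F2c, F3c, F4c, F5c, F6c]

/-- The conditions `(E₁)–(E₆)` as a family, indexed from `0`. -/
def CondE : Fin 6 → C6 → Prop :=
  ![E1c, E2c, E3c, E4c, E5c, E6c]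

/-- The vectors by which `f̃₀` translates in the cases `(F₁)–(F₆)`, indexed from `0`; in the cases
`(E₁)–(E₆)`, `ẽ₀` subtracts them. -/
def f0Step : Fin 6 → C6 :=
  ![⟨1, 0, 0, 0, 0, 0⟩, ⟨0, 0, 1, 1, 0, -1⟩, ⟨0, 0, 2, 0, -1, 0⟩, ⟨0, 1, 0, -2, 0, 0⟩,
    ⟨1, 0, -1, -1, 0, 0⟩, ⟨0, 0, 0, 0, 0, -1⟩]

theorem condF_iff_isFirstMax (i : Fin 6) (b : C6) : CondF i b ↔ IsFirstMax (tupleA b) i := by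
  fin_cases i <;>
    simp only [CondF, F1c, F2c, F3c, F4c, F5c, F6c, IsFirstMax, tupleA, Fin.forall_fin_succ,
      Fin.reduceFinMk, Fin.reduceSucc, Matrix.cons_val] <;>
    grind

theorem condE_iff_isLastMax (i : Fin 6) (b : C6) : CondE i b ↔ IsLastMax (tupleA b) i := by
  fin_cases i <;>
    simp only [CondE, E1c, E2c, E3c, E4c, E5c, E6c, IsLastMax, tupleA, Fin.forall_fin_succ,
      Fin.reduceFinMk, Fin.reduceSucc, Matrix.cons_val] <;>
    grind

theorem existsUnique_condF (b : C6) : ∃! i, CondF i b := by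
  simpa only [condF_iff_isFirstMax] using existsUnique_isFirstMax (tupleA b)

theorem existsUnique_condE (b : C6) : ∃! i, CondE i b := by
  simpa only [condE_iff_isLastMax] using existsUnique_isLastMax (tupleA b)

theorem zz1_f0Step (i : Fin 6) : zz1 (f0Step i) = ![-1, -1, 0, 0, -1, -1] i := by
  fin_cases i <;> rfl

theorem zz2_f0Step (i : Fin 6) : zz2 (f0Step i) = ![0, -1, -1, 2, 1, 0] i := by
  fin_cases i <;> rfl

theorem zz3_f0Step (i : Fin 6) : zz3 (f0Step i) = ![0, 1, 2, -1, -1, 0] i := by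
  fin_cases i <;> rfl

theorem zz4_f0Step (i : Fin 6) : zz4 (f0Step i) = ![0, 0, -1, -1, 0, 0] i := by
  fin_cases i <;> rfl

theorem two_dvd_f0Step (i : Fin 6) : 2 ∣ (f0Step i).y3 - (f0Step i).x3 := by
  fin_cases i <;> decide

theorem condE_translate_f0Step (i : Fin 6) (b : C6) :
    CondE i ((f0Step i).translate b) ↔ CondF i b := by
  fin_cases i <;>
    simp only [CondE, CondF, E1c, E2c, E3c, E4c, E5c, E6c, F1c, F2c, F3c, F4c, F5c, F6c,
      zz1_translate, zz2_translate, zz3_translate, zz4_translate (two_dvd_f0Step _),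
      zz1_f0Step, zz2_f0Step, zz3_f0Step, zz4_f0Step,
      Fin.zero_eta, Fin.mk_one, Fin.reduceFinMk, Matrix.cons_val] <;>
    omega

theorem f0op_eq_chk {i : Fin 6} {b : C6} (hi : CondF i b) :
    f0op b = chk ((f0Step i).translate b) := by
  have hcond (j : Fin 6) : CondF j b ↔ j = i :=
    ⟨fun hj ↦ (existsUnique_condF b).unique hj hi, fun hj ↦ hj ▸ hi⟩
  have hchain : f0op b =
      if CondF 0 b then chk ((f0Step 0).translate b)
      else if CondF 1 b then chk ((f0Step 1).translate b)
      else if CondF 2 b then chk ((f0Step 2).translate b)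
      else if CondF 3 b then chk ((f0Step 3).translate b)
      else if CondF 4 b then chk ((f0Step 4).translate b)
      else if CondF 5 b then chk ((f0Step 5).translate b)
      else none := by
    simp [f0op, CondF, f0Step, C6.translate, sub_eq_add_neg]
  simp only [hchain, hcond]
  fin_cases i <;> rfl

theorem e0op_eq_chk {i : Fin 6} {b : C6} (hi : CondE i b) :
    e0op b = chk ((f0Step i).translate.symm b) := by
  have hcond (j : Fin 6) : CondE j b ↔ j = i :=
    ⟨fun hj ↦ (existsUnique_condE b).unique hj hi, fun hj ↦ hj ▸ hi⟩
  have hchain : e0op b =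
      if CondE 0 b then chk ((f0Step 0).translate.symm b)
      else if CondE 1 b then chk ((f0Step 1).translate.symm b)
      else if CondE 2 b then chk ((f0Step 2).translate.symm b)
      else if CondE 3 b then chk ((f0Step 3).translate.symm b)
      else if CondE 4 b then chk ((f0Step 4).translate.symm b)
      else if CondE 5 b then chk ((f0Step 5).translate.symm b)
      else none := by
    simp [e0op, CondE, f0Step, C6.translate, sub_eq_add_neg]
  simp only [hchain, hcond]
  fin_cases i <;> rfl

theorem f0op_eq_some_iff {b b' : C6} (hb' : b'.Nonneg) :
    f0op b = some b' ↔ ∃ i, CondF i b ∧ (f0Step i).translate b = b' := by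
  obtain ⟨i, hi, huniq⟩ := existsUnique_condF b
  rw [f0op_eq_chk hi, chk_eq_some_iff hb']
  exact ⟨fun h ↦ ⟨i, hi, h⟩, fun ⟨j, hj, h⟩ ↦ huniq j hj ▸ h⟩

theorem e0op_eq_some_iff {b b' : C6} (hb : b.Nonneg) :
    e0op b' = some b ↔ ∃ i, CondE i b' ∧ (f0Step i).translate.symm b' = b := by
  obtain ⟨i, hi, huniq⟩ := existsUnique_condE b'
  rw [e0op_eq_chk hi, chk_eq_some_iff hb]
  exact ⟨fun h ↦ ⟨i, hi, h⟩, fun ⟨j, hj, h⟩ ↦ huniq j hj ▸ h⟩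

/-- On `B_{≥0}`, `b' = f̃₀ b` iff `b = ẽ₀ b'`. -/
theorem f0_e0_inverse (b b' : C6) (hb : memB b) (hb' : memB b') :
    f0op b = some b' ↔ e0op b' = some b := by
  rw [f0op_eq_some_iff hb'.nonneg, e0op_eq_some_iff hb.nonneg]
  refine exists_congr fun i ↦ ?_
  rw [Equiv.symm_apply_eq, eq_comm (a := b'), and_congr_left_iff]
  rintro rfl
  exact (condE_translate_f0Step i b).symm

end
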